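/- arXiv:1203.2208 — 2 statements merged into one kernel-verified Lean document; each statement's English description precedes it below -/
import Mathlib

section
/- For every real number 0 < q < 1 there exists a constant c₀ = c₀(q) ∈ (0, 1) such that for every positive integer n and every real polynomial P of degree at most n with P(−1) = 0, P(x) ≥ 0 and P'(x) ≥ 0 for all x ∈ [−1, 1], one has ∫_{−1}^{1} P'(x)^q dx ≤ (2/q) · ∫_{−1}^{1 − c₀/n²} P(x)^q (1 − x)^{−q} dx. -/
open Polynomial MeasureTheory

/-!
For `w = P / (1 - x)`, the tangent line at `w` of the concave power `t ↦ t ^ q` gives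
`P' ^ q ≤ q w ^ (q - 1) P' + (1 - q) w ^ q`. The right-hand side is the derivative of
`P ^ q (1 - x) ^ (1 - q)` plus `2 (1 - q) w ^ q`. The function being differentiated is
nonnegative at `-1` and vanishes at `1`, so integrating yields
`∫ P' ^ q ≤ 2 (1 - q) ∫ w ^ q` over the whole of `[-1, 1]`. By Markov's inequality
`P ≥ P(1) / 2` within `1 / (4 n ^ 2)` of the right endpoint, so for small `c₀` the
part of `∫ w ^ q` within `c₀ / n ^ 2` of it is at most the remaining part. Hence
`∫ P' ^ q ≤ 4 (1 - q) ∫ w ^ q` with the second integral over `[-1, 1 - c₀ / n ^ 2]`,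
and `4 (1 - q) ≤ 2 / q`.
-/

open Set

section SingularWeight

variable {q b u v : ℝ} {f : ℝ → ℝ}

lemma intervalIntegrable_sub_rpow_neg (hq : q < 1) (b u v : ℝ) :
    IntervalIntegrable (fun x : ℝ => (b - x) ^ (-q)) volume u v := by
  have h := (intervalIntegral.intervalIntegrable_rpow' (a := b - u) (b := b - v)
    (neg_lt_neg hq)).comp_sub_left b
  simpa only [sub_sub_cancel] using h

lemma integral_sub_rpow_neg (hq : q < 1) (b u v : ℝ) :
    ∫ x in u..v, (b - x) ^ (-q) = ((b - u) ^ (1 - q) - (b - v) ^ (1 - q)) / (1 - q) := by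
  rw [intervalIntegral.integral_comp_sub_left (fun x : ℝ => x ^ (-q)),
    integral_rpow (Or.inl (neg_lt_neg hq)), neg_add_eq_sub]

lemma intervalIntegrable_rpow_mul_sub_rpow_neg (hq0 : 0 ≤ q) (hq1 : q < 1) (b : ℝ)
    (hf : ContinuousOn f (uIcc u v)) :
    IntervalIntegrable (fun x => f x ^ q * (b - x) ^ (-q)) volume u v :=
  (intervalIntegrable_sub_rpow_neg hq1 b u v).continuousOn_mul
    (hf.rpow_const fun _ _ => Or.inr hq0)

lemma rpow_mul_sub_rpow_neg_nonneg {x : ℝ} (hf : 0 ≤ f x) (hx : x ≤ b) :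
    0 ≤ f x ^ q * (b - x) ^ (-q) :=
  mul_nonneg (Real.rpow_nonneg hf q) (Real.rpow_nonneg (sub_nonneg.2 hx) _)

lemma integral_rpow_mul_sub_rpow_neg_nonneg (huv : u ≤ v) (hvb : v ≤ b)
    (hf : ∀ x ∈ Icc u v, 0 ≤ f x) : 0 ≤ ∫ x in u..v, f x ^ q * (b - x) ^ (-q) :=
  intervalIntegral.integral_nonneg huv fun x hx =>
    rpow_mul_sub_rpow_neg_nonneg (hf x hx) (hx.2.trans hvb)

lemma rpow_mul_le_integral_rpow_mul_sub_rpow_neg (hq0 : 0 ≤ q) (hq1 : q < 1) (huv : u ≤ v)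
    (hvb : v ≤ b) (hcont : ContinuousOn f (Icc u v)) (hmono : MonotoneOn f (Icc u v))
    (hu : 0 ≤ f u) :
    f u ^ q * (((b - u) ^ (1 - q) - (b - v) ^ (1 - q)) / (1 - q)) ≤
      ∫ x in u..v, f x ^ q * (b - x) ^ (-q) := by
  rw [← uIcc_of_le huv] at hcont
  rw [← integral_sub_rpow_neg hq1, ← intervalIntegral.integral_const_mul]
  refine intervalIntegral.integral_mono_on huv
    ((intervalIntegrable_sub_rpow_neg hq1 b u v).const_mul _)
    (intervalIntegrable_rpow_mul_sub_rpow_neg hq0 hq1 b hcont) fun x hx => ?_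
  exact mul_le_mul_of_nonneg_right
    (Real.rpow_le_rpow hu (hmono (left_mem_Icc.2 huv) hx hx.1) hq0)
    (Real.rpow_nonneg (sub_nonneg.2 (hx.2.trans hvb)) _)

lemma integral_rpow_mul_sub_rpow_neg_le_rpow_mul (hq0 : 0 ≤ q) (hq1 : q < 1) (huv : u ≤ v)
    (hvb : v ≤ b) (hcont : ContinuousOn f (Icc u v)) (hmono : MonotoneOn f (Icc u v))
    (hu : 0 ≤ f u) :
    ∫ x in u..v, f x ^ q * (b - x) ^ (-q) ≤
      f v ^ q * (((b - u) ^ (1 - q) - (b - v) ^ (1 - q)) / (1 - q)) := by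
  rw [← uIcc_of_le huv] at hcont
  rw [← integral_sub_rpow_neg hq1, ← intervalIntegral.integral_const_mul]
  refine intervalIntegral.integral_mono_on huv
    (intervalIntegrable_rpow_mul_sub_rpow_neg hq0 hq1 b hcont)
    ((intervalIntegrable_sub_rpow_neg hq1 b u v).const_mul _) fun x hx => ?_
  have hfx : 0 ≤ f x := hu.trans (hmono (left_mem_Icc.2 huv) hx hx.1)
  exact mul_le_mul_of_nonneg_right
    (Real.rpow_le_rpow hfx (hmono hx (right_mem_Icc.2 huv) hx.2) hq0)
    (Real.rpow_nonneg (sub_nonneg.2 (hx.2.trans hvb)) _)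

lemma integral_rpow_mul_sub_rpow_neg_tail_le {a A B θ : ℝ} (hq0 : 0 ≤ q) (hq1 : q < 1)
    (hcont : ContinuousOn f (Icc a b)) (hmono : MonotoneOn f (Icc a b))
    (hnonneg : ∀ x ∈ Icc a b, 0 ≤ f x) (hA : 0 ≤ A) (hAB : A ≤ B) (hB : B ≤ b - a)
    (hθ : 0 ≤ θ) (hf : θ * f b ≤ f (b - B))
    (h : A ^ (1 - q) ≤ θ ^ q * (B ^ (1 - q) - A ^ (1 - q))) :
    ∫ x in (b - A)..b, f x ^ q * (b - x) ^ (-q) ≤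
      ∫ x in a..(b - A), f x ^ q * (b - x) ^ (-q) := by
  have hq : 0 < 1 - q := sub_pos.2 hq1
  have hAmem : b - A ∈ Icc a b := ⟨by linarith, by linarith⟩
  have hBmem : b - B ∈ Icc a b := ⟨by linarith, by linarith⟩
  have hbmem : b ∈ Icc a b := right_mem_Icc.2 (by linarith)
  have hsubA : Icc (b - A) b ⊆ Icc a b := Icc_subset_Icc_left hAmem.1
  have hsubB : Icc (b - B) (b - A) ⊆ Icc a b := Icc_subset_Icc hBmem.1 hAmem.2
  calc ∫ x in (b - A)..b, f x ^ q * (b - x) ^ (-q)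
      ≤ f b ^ q * (A ^ (1 - q) / (1 - q)) := by
        simpa [Real.zero_rpow hq.ne'] using integral_rpow_mul_sub_rpow_neg_le_rpow_mul hq0 hq1
          hAmem.2 le_rfl (hcont.mono hsubA) (hmono.mono hsubA) (hnonneg _ hAmem)
    _ ≤ f b ^ q * (θ ^ q * (B ^ (1 - q) - A ^ (1 - q)) / (1 - q)) :=
        mul_le_mul_of_nonneg_left (div_le_div_of_nonneg_right h hq.le)
          (Real.rpow_nonneg (hnonneg b hbmem) q)
    _ = (θ * f b) ^ q * ((B ^ (1 - q) - A ^ (1 - q)) / (1 - q)) := by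
        rw [Real.mul_rpow hθ (hnonneg b hbmem)]
        ring
    _ ≤ f (b - B) ^ q * ((B ^ (1 - q) - A ^ (1 - q)) / (1 - q)) :=
        mul_le_mul_of_nonneg_right
          (Real.rpow_le_rpow (mul_nonneg hθ (hnonneg b hbmem)) hf hq0)
          (div_nonneg (sub_nonneg.2 (Real.rpow_le_rpow hA hAB hq.le)) hq.le)
    _ ≤ ∫ x in (b - B)..(b - A), f x ^ q * (b - x) ^ (-q) := by
        simpa only [sub_sub_cancel] using rpow_mul_le_integral_rpow_mul_sub_rpow_neg hq0 hq1
          (by linarith) hAmem.2 (hcont.mono hsubB) (hmono.mono hsubB) (hnonneg _ hBmem)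
    _ ≤ ∫ x in a..(b - A), f x ^ q * (b - x) ^ (-q) := by
        have hsub : uIcc a (b - A) ⊆ Icc a b :=
          uIcc_of_le hAmem.1 ▸ Icc_subset_Icc_right hAmem.2
        exact intervalIntegral.integral_mono_interval hBmem.1 (by linarith) le_rfl
          (ae_restrict_of_forall_mem measurableSet_Ioc fun x hx =>
            have hxb : x ≤ b := hx.2.trans hAmem.2
            rpow_mul_sub_rpow_neg_nonneg (hnonneg x ⟨hx.1.le, hxb⟩) hxb)
          (intervalIntegrable_rpow_mul_sub_rpow_neg hq0 hq1 b (hcont.mono hsub))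

end SingularWeight

section Hardy

variable {q a b : ℝ} {f f' : ℝ → ℝ}

lemma rpow_le_tangent {w t : ℝ} (hq0 : 0 ≤ q) (hq1 : q ≤ 1) (hw : 0 < w) (ht : 0 ≤ t) :
    t ^ q ≤ q * (w ^ (q - 1) * t) + (1 - q) * w ^ q := by
  have hbern : (t / w) ^ q ≤ 1 + q * (t / w - 1) := by
    simpa using rpow_one_add_le_one_add_mul_self
      (show -1 ≤ t / w - 1 by linarith [div_nonneg ht hw.le]) hq0 hq1
  calc t ^ q = w ^ q * (t / w) ^ q := by
        rw [← Real.mul_rpow hw.le (div_nonneg ht hw.le), mul_div_cancel₀ _ hw.ne']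
    _ ≤ w ^ q * (1 + q * (t / w - 1)) :=
        mul_le_mul_of_nonneg_left hbern (Real.rpow_nonneg hw.le q)
    _ = q * (w ^ (q - 1) * t) + (1 - q) * w ^ q := by
        rw [Real.rpow_sub_one hw.ne']
        ring

lemma hasDerivAt_rpow_mul_sub_rpow {x f'x : ℝ} (hf : HasDerivAt f f'x x) (hpos : 0 < f x)
    (hx : x < b) :
    HasDerivAt (fun y => f y ^ q * (b - y) ^ (1 - q))
      (q * ((f x / (b - x)) ^ (q - 1) * f'x) - (1 - q) * (f x / (b - x)) ^ q) x := by
  have hbx : 0 < b - x := sub_pos.2 hx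
  refine ((hf.rpow_const (Or.inl hpos.ne')).mul
    (((hasDerivAt_id' x).const_sub b).rpow_const (Or.inl hbx.ne'))).congr_deriv ?_
  rw [Real.div_rpow hpos.le hbx.le, Real.div_rpow hpos.le hbx.le, ← neg_sub 1 q,
    Real.rpow_neg hbx.le, show 1 - q - 1 = -q by ring, Real.rpow_neg hbx.le]
  field_simp
  ring

lemma integral_rpow_deriv_le_of_pos (hq0 : 0 ≤ q) (hq1 : q < 1) (hab : a ≤ b)
    (hcont : ContinuousOn f (Icc a b)) (hderiv : ∀ x ∈ Ioo a b, HasDerivAt f (f' x) x)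
    (hf' : ∀ x ∈ Ioo a b, 0 ≤ f' x) (hint : IntervalIntegrable (fun x => f' x ^ q) volume a b)
    (hpos : ∀ x ∈ Icc a b, 0 < f x) :
    ∫ x in a..b, f' x ^ q ≤ 2 * (1 - q) * ∫ x in a..b, f x ^ q * (b - x) ^ (-q) := by
  have hq : 0 < 1 - q := sub_pos.2 hq1
  have hweight : IntervalIntegrable (fun x => 2 * (1 - q) * (f x ^ q * (b - x) ^ (-q)))
      volume a b :=
    (intervalIntegrable_rpow_mul_sub_rpow_neg hq0 hq1 b (uIcc_of_le hab ▸ hcont)).const_mul _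
  have hboundary : ContinuousOn (fun x => f x ^ q * (b - x) ^ (1 - q)) (Icc a b) :=
    (hcont.rpow_const fun _ _ => Or.inr hq0).mul
      ((continuousOn_const.sub continuousOn_id).rpow_const fun _ _ => Or.inr hq.le)
  have hpointwise : ∀ x ∈ Ioo a b, f' x ^ q - 2 * (1 - q) * (f x ^ q * (b - x) ^ (-q)) ≤
      q * ((f x / (b - x)) ^ (q - 1) * f' x) - (1 - q) * (f x / (b - x)) ^ q := by
    intro x hx
    have hbx : 0 < b - x := sub_pos.2 hx.2
    have hfx : 0 < f x := hpos x (Ioo_subset_Icc_self hx)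
    have htangent := rpow_le_tangent hq0 hq1.le (div_pos hfx hbx) (hf' x hx)
    rw [Real.rpow_neg hbx.le, ← div_eq_mul_inv, ← Real.div_rpow hfx.le hbx.le]
    linarith
  have hftc := intervalIntegral.integral_le_sub_of_hasDeriv_right_of_le hab hboundary
    (fun x hx => (hasDerivAt_rpow_mul_sub_rpow (hderiv x hx)
      (hpos x (Ioo_subset_Icc_self hx)) hx.2).hasDerivWithinAt)
    ((intervalIntegrable_iff_integrableOn_Icc_of_le hab).1 (hint.sub hweight)) hpointwise
  have hleft : 0 ≤ f a ^ q * (b - a) ^ (1 - q) :=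
    mul_nonneg (Real.rpow_nonneg (hpos a (left_mem_Icc.2 hab)).le q)
      (Real.rpow_nonneg (sub_nonneg.2 hab) _)
  rw [intervalIntegral.integral_sub hint hweight, intervalIntegral.integral_const_mul,
    sub_self, Real.zero_rpow hq.ne', mul_zero] at hftc
  linarith

lemma integral_add_const_rpow_mul_sub_rpow_neg_le {ε : ℝ} (hq0 : 0 ≤ q) (hq1 : q < 1)
    (hab : a ≤ b) (hcont : ContinuousOn f (Icc a b)) (hnonneg : ∀ x ∈ Icc a b, 0 ≤ f x)
    (hε : 0 ≤ ε) :
    ∫ x in a..b, (f x + ε) ^ q * (b - x) ^ (-q) ≤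
      (∫ x in a..b, f x ^ q * (b - x) ^ (-q)) + ε ^ q * ∫ x in a..b, (b - x) ^ (-q) := by
  rw [← uIcc_of_le hab] at hcont
  have hf := intervalIntegrable_rpow_mul_sub_rpow_neg hq0 hq1 b hcont
  have hconst := (intervalIntegrable_sub_rpow_neg hq1 b a b).const_mul (ε ^ q)
  rw [← intervalIntegral.integral_const_mul, ← intervalIntegral.integral_add hf hconst]
  refine intervalIntegral.integral_mono_on hab
    (intervalIntegrable_rpow_mul_sub_rpow_neg hq0 hq1 b (hcont.add continuousOn_const))
    (hf.add hconst) fun x hx => ?_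
  rw [← add_mul]
  exact mul_le_mul_of_nonneg_right (Real.rpow_add_le_add_rpow (hnonneg x hx) hε hq0 hq1.le)
    (Real.rpow_nonneg (sub_nonneg.2 hx.2) _)

theorem integral_rpow_deriv_le (hq0 : 0 < q) (hq1 : q < 1) (hab : a ≤ b)
    (hcont : ContinuousOn f (Icc a b)) (hderiv : ∀ x ∈ Ioo a b, HasDerivAt f (f' x) x)
    (hf' : ∀ x ∈ Ioo a b, 0 ≤ f' x) (hint : IntervalIntegrable (fun x => f' x ^ q) volume a b)
    (hnonneg : ∀ x ∈ Icc a b, 0 ≤ f x) :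
    ∫ x in a..b, f' x ^ q ≤ 2 * (1 - q) * ∫ x in a..b, f x ^ q * (b - x) ^ (-q) := by
  -- `f ^ q` need not be differentiable where `f` vanishes, so apply the bound to `f + ε`.
  have hbound : ∀ ε ∈ Ioi (0 : ℝ), ∫ x in a..b, f' x ^ q ≤
      2 * (1 - q) * ((∫ x in a..b, f x ^ q * (b - x) ^ (-q)) +
        ε ^ q * ∫ x in a..b, (b - x) ^ (-q)) := fun ε hε =>
    (integral_rpow_deriv_le_of_pos hq0.le hq1 hab (hcont.add continuousOn_const)
      (fun x hx => (hderiv x hx).add_const ε) hf' hint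
      fun x hx => add_pos_of_nonneg_of_pos (hnonneg x hx) hε).trans
    (mul_le_mul_of_nonneg_left
      (integral_add_const_rpow_mul_sub_rpow_neg_le hq0.le hq1 hab hcont hnonneg hε.le)
      (by linarith))
  have hlim : ContinuousAt (fun ε : ℝ => 2 * (1 - q) *
      ((∫ x in a..b, f x ^ q * (b - x) ^ (-q)) + ε ^ q * ∫ x in a..b, (b - x) ^ (-q))) 0 :=
    (((Real.continuousAt_rpow_const 0 q (Or.inr hq0.le)).mul_const _).const_add _).const_mul _
  have h := ge_of_tendsto (hlim.tendsto.mono_left nhdsWithin_le_nhds)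
    (eventually_mem_nhdsWithin.mono hbound)
  simpa [Real.zero_rpow hq0.ne'] using h

end Hardy

section Markov

variable {P : ℝ[X]} {n : ℕ} {a b : ℝ}

lemma derivative_eval_one_le_sq (hdeg : P.natDegree ≤ n)
    (hbound : ∀ x ∈ Icc (-1 : ℝ) 1, |P.eval x| ≤ 1) : P.derivative.eval 1 ≤ (n : ℝ) ^ 2 := by
  simpa [Chebyshev.derivative_T_eval_one] using
    Chebyshev.eval_iterate_derivative_le_of_forall_abs_le_one (k := 1) le_rfl
      (natDegree_le_iff_degree_le.1 hdeg) hbound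

lemma derivative_eval_right_mul_le {M : ℝ} (hdeg : P.natDegree ≤ n) (hab : a < b)
    (hbound : ∀ x ∈ Icc a b, |P.eval x| ≤ M) :
    P.derivative.eval b * (b - a) ≤ 2 * (n : ℝ) ^ 2 * M := by
  rcases ((abs_nonneg _).trans (hbound b (right_mem_Icc.2 hab.le))).eq_or_lt with rfl | hM
  · have hP : P = 0 := eq_zero_of_infinite_isRoot P ((Icc_infinite hab).mono fun x hx =>
      abs_nonpos_iff.1 (hbound x hx))
    simp [hP]
  set L : ℝ[X] := C ((b - a) / 2) * X + C ((a + b) / 2) with hL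
  have hL1 : L.eval 1 = b := by
    simp only [hL, eval_add, eval_mul, eval_C, eval_X]
    ring
  have hL' : L.derivative = C ((b - a) / 2) := by simp [hL]
  have hLdeg : (C M⁻¹ * P.comp L).natDegree ≤ n :=
    calc (C M⁻¹ * P.comp L).natDegree ≤ (P.comp L).natDegree := natDegree_C_mul_le _ _
      _ ≤ P.natDegree * L.natDegree := natDegree_comp_le
      _ ≤ n * 1 := Nat.mul_le_mul hdeg natDegree_linear_le
      _ = n := mul_one n
  have hLbound : ∀ x ∈ Icc (-1 : ℝ) 1, |(C M⁻¹ * P.comp L).eval x| ≤ 1 := by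
    intro x hx
    have hmem : L.eval x ∈ Icc a b := by
      simp only [hL, eval_add, eval_mul, eval_C, eval_X]
      constructor <;> nlinarith [hx.1, hx.2]
    rw [eval_mul, eval_C, eval_comp, abs_mul, abs_inv, abs_of_pos hM, inv_mul_le_one₀ hM]
    exact hbound _ hmem
  have hmarkov : M⁻¹ * ((b - a) / 2 * P.derivative.eval b) ≤ (n : ℝ) ^ 2 := by
    simpa only [derivative_C_mul, derivative_comp, hL', eval_mul, eval_C, eval_comp, hL1]
      using derivative_eval_one_le_sq hLdeg hLbound
  rw [inv_mul_le_iff₀ hM] at hmarkov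
  linarith

lemma monotoneOn_eval_of_derivative_nonneg (hP' : ∀ x ∈ Icc a b, 0 ≤ P.derivative.eval x) :
    MonotoneOn (fun x => P.eval x) (Icc a b) := by
  refine monotoneOn_of_deriv_nonneg (convex_Icc a b) P.continuousOn P.differentiableOn
    fun x hx => ?_
  rw [P.deriv]
  exact hP' x (interior_subset hx)

lemma eval_nonneg_of_derivative_nonneg (hP : 0 ≤ P.eval a)
    (hP' : ∀ x ∈ Icc a b, 0 ≤ P.derivative.eval x) : ∀ x ∈ Icc a b, 0 ≤ P.eval x := fun _ hx =>
  hP.trans (monotoneOn_eval_of_derivative_nonneg hP' (left_mem_Icc.2 (hx.1.trans hx.2)) hx hx.1)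

lemma eval_right_sub_eval_le {x : ℝ} (hdeg : P.natDegree ≤ n) (hab : a < b)
    (hmono : MonotoneOn (fun x => P.eval x) (Icc a b)) (hnonneg : ∀ x ∈ Icc a b, 0 ≤ P.eval x)
    (hx : x ∈ Icc ((a + b) / 2) b) :
    P.eval b - P.eval x ≤ 4 * (n : ℝ) ^ 2 / (b - a) * P.eval b * (b - x) := by
  have hb : b ∈ Icc a b := right_mem_Icc.2 hab.le
  have hderiv : ∀ y ∈ Ioo x b, deriv (fun z => P.eval z) y ≤
      4 * (n : ℝ) ^ 2 / (b - a) * P.eval b := by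
    intro y hy
    have hmid : b - a ≤ 2 * (y - a) := by linarith [hx.1, hy.1]
    have hbound : ∀ z ∈ Icc a y, |P.eval z| ≤ P.eval b := fun z hz => by
      have hz' : z ∈ Icc a b := ⟨hz.1, hz.2.trans hy.2.le⟩
      rw [abs_of_nonneg (hnonneg z hz')]
      exact hmono hz' hb hz'.2
    have hmarkov := derivative_eval_right_mul_le hdeg (by linarith) hbound
    rw [P.deriv, div_mul_eq_mul_div, le_div_iff₀ (sub_pos.2 hab)]
    rcases le_total 0 (P.derivative.eval y) with hy' | hy'
    · linarith [mul_le_mul_of_nonneg_left hmid hy']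
    · exact (mul_nonpos_of_nonpos_of_nonneg hy' (sub_nonneg.2 hab.le)).trans
        (mul_nonneg (by positivity) (hnonneg b hb))
  exact (convex_Icc x b).image_sub_le_mul_sub_of_deriv_le P.continuousOn P.differentiableOn
    (by rwa [interior_Icc]) x (left_mem_Icc.2 hx.2) b (right_mem_Icc.2 hx.2) hx.2

lemma half_mul_eval_right_le_eval (hn : 0 < n) (hdeg : P.natDegree ≤ n) (hab : a < b)
    (hmono : MonotoneOn (fun x => P.eval x) (Icc a b))
    (hnonneg : ∀ x ∈ Icc a b, 0 ≤ P.eval x) :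
    1 / 2 * P.eval b ≤ P.eval (b - (b - a) / (8 * (n : ℝ) ^ 2)) := by
  have hn2 : (1 : ℝ) ≤ (n : ℝ) ^ 2 := one_le_pow₀ (by exact_mod_cast hn)
  have hab' : 0 < b - a := sub_pos.2 hab
  have hlen : (b - a) / (8 * (n : ℝ) ^ 2) ≤ (b - a) / 2 := by
    gcongr
    linarith
  have h := eval_right_sub_eval_le (x := b - (b - a) / (8 * (n : ℝ) ^ 2)) hdeg hab hmono hnonneg
    ⟨by linarith, sub_le_self b (by positivity)⟩
  have hcoeff : 4 * (n : ℝ) ^ 2 / (b - a) * P.eval b * ((b - a) / (8 * (n : ℝ) ^ 2)) =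
      1 / 2 * P.eval b := by
    field_simp
    ring
  rw [sub_sub_cancel, hcoeff] at h
  linarith

end Markov

section PolynomialBound

variable {P : ℝ[X]} {n : ℕ} {a b q r : ℝ}

lemma integral_eval_rpow_tail_le (hq0 : 0 ≤ q) (hq1 : q < 1) (hr0 : 0 ≤ r)
    (hr : r ^ (1 - q) ≤ 1 / 3) (hn : 0 < n) (hdeg : P.natDegree ≤ n) (hab : a < b)
    (hmono : MonotoneOn (fun x => P.eval x) (Icc a b)) (hnonneg : ∀ x ∈ Icc a b, 0 ≤ P.eval x) :
    ∫ x in (b - r * ((b - a) / (8 * (n : ℝ) ^ 2)))..b, P.eval x ^ q * (b - x) ^ (-q) ≤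
      ∫ x in a..(b - r * ((b - a) / (8 * (n : ℝ) ^ 2))), P.eval x ^ q * (b - x) ^ (-q) := by
  have hn2 : (1 : ℝ) ≤ (n : ℝ) ^ 2 := one_le_pow₀ (by exact_mod_cast hn)
  have hab' : 0 < b - a := sub_pos.2 hab
  have hB : (b - a) / (8 * (n : ℝ) ^ 2) ≤ b - a := div_le_self hab'.le (by linarith)
  have hr1 : r ≤ 1 := by
    by_contra! h
    linarith [Real.one_lt_rpow h (sub_pos.2 hq1)]
  have hhalf : (1 / 2 : ℝ) ≤ (1 / 2) ^ q := by
    simpa using Real.rpow_le_rpow_of_exponent_ge (show (0 : ℝ) < 1 / 2 by norm_num)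
      (by norm_num) hq1.le
  have hratio : r ^ (1 - q) ≤ (1 / 2) ^ q * (1 - r ^ (1 - q)) := by
    linarith [mul_le_mul_of_nonneg_right hhalf (show 0 ≤ 1 - r ^ (1 - q) by linarith)]
  refine integral_rpow_mul_sub_rpow_neg_tail_le hq0 hq1 P.continuousOn hmono hnonneg
    (by positivity) (mul_le_of_le_one_left (by positivity) hr1) hB (by norm_num : (0 : ℝ) ≤ 1 / 2)
    (half_mul_eval_right_le_eval hn hdeg hab hmono hnonneg) ?_
  rw [Real.mul_rpow hr0 (by positivity), ← one_sub_mul, ← mul_assoc]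
  exact mul_le_mul_of_nonneg_right hratio (by positivity)

theorem integral_derivative_eval_rpow_le (hq0 : 0 < q) (hq1 : q < 1) (hr0 : 0 ≤ r)
    (hr : r ^ (1 - q) ≤ 1 / 3) (hn : 0 < n) (hdeg : P.natDegree ≤ n) (hab : a < b)
    (hP : 0 ≤ P.eval a) (hP' : ∀ x ∈ Icc a b, 0 ≤ P.derivative.eval x) :
    ∫ x in a..b, P.derivative.eval x ^ q ≤ 4 * (1 - q) *
      ∫ x in a..(b - r * ((b - a) / (8 * (n : ℝ) ^ 2))), P.eval x ^ q * (b - x) ^ (-q) := by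
  have hmono := monotoneOn_eval_of_derivative_nonneg hP'
  have hnonneg := eval_nonneg_of_derivative_nonneg hP hP'
  have hint := fun u v => intervalIntegrable_rpow_mul_sub_rpow_neg (u := u) (v := v) hq0.le hq1 b
    P.continuousOn
  have hderiv : Continuous fun x => P.derivative.eval x ^ q :=
    P.derivative.continuous.rpow_const fun _ => Or.inr hq0.le
  have htail := integral_eval_rpow_tail_le hq0.le hq1 hr0 hr hn hdeg hab hmono hnonneg
  set c := b - r * ((b - a) / (8 * (n : ℝ) ^ 2))
  calc ∫ x in a..b, P.derivative.eval x ^ q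
      ≤ 2 * (1 - q) * ∫ x in a..b, P.eval x ^ q * (b - x) ^ (-q) :=
        integral_rpow_deriv_le hq0 hq1 hab.le P.continuousOn (fun x _ => P.hasDerivAt x)
          (fun x hx => hP' x (Ioo_subset_Icc_self hx)) (hderiv.intervalIntegrable a b) hnonneg
    _ = 2 * (1 - q) * ((∫ x in a..c, P.eval x ^ q * (b - x) ^ (-q)) +
          ∫ x in c..b, P.eval x ^ q * (b - x) ^ (-q)) := by
        rw [intervalIntegral.integral_add_adjacent_intervals (hint a c) (hint c b)]
    _ ≤ 2 * (1 - q) * ((∫ x in a..c, P.eval x ^ q * (b - x) ^ (-q)) +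
          ∫ x in a..c, P.eval x ^ q * (b - x) ^ (-q)) :=
        mul_le_mul_of_nonneg_left (add_le_add_right htail _) (by linarith)
    _ = 4 * (1 - q) * ∫ x in a..c, P.eval x ^ q * (b - x) ^ (-q) := by ring

end PolynomialBound

lemma exists_rpow_one_sub_eq_third {q : ℝ} (hq : q < 1) :
    ∃ r : ℝ, 0 < r ∧ r < 1 ∧ r ^ (1 - q) = 1 / 3 :=
  have hq' : 0 < 1 - q := sub_pos.2 hq
  ⟨(1 / 3) ^ (1 - q)⁻¹, by positivity,
    Real.rpow_lt_one (by norm_num) (by norm_num) (inv_pos.2 hq'),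
    Real.rpow_inv_rpow (by norm_num) hq'.ne'⟩

theorem stmt12_general (q : ℝ) (hq0 : 0 < q) (hq1 : q < 1) :
    ∃ c₀ : ℝ, 0 < c₀ ∧ c₀ < 1 ∧ ∀ n : ℕ, 0 < n →
      ∀ P : Polynomial ℝ, P.natDegree ≤ n → 0 ≤ P.eval (-1) →
        (∀ x ∈ Set.Icc (-1 : ℝ) 1, 0 ≤ P.derivative.eval x) →
        (∫ x in (-1 : ℝ)..1, (P.derivative.eval x) ^ q) ≤
          (2 / q) * ∫ x in (-1 : ℝ)..(1 - c₀ / (n : ℝ) ^ 2),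
            (P.eval x) ^ q * (1 - x) ^ (-q) := by
  obtain ⟨r, hr0, hr1, hr⟩ := exists_rpow_one_sub_eq_third hq1
  refine ⟨r / 4, by linarith, by linarith, fun n hn P hdeg hP hP' => ?_⟩
  have hn2 : (1 : ℝ) ≤ (n : ℝ) ^ 2 := one_le_pow₀ (by exact_mod_cast hn)
  have hc0 : 0 ≤ r / 4 / (n : ℝ) ^ 2 := by positivity
  have hc1 : r / 4 / (n : ℝ) ^ 2 ≤ r / 4 := div_le_self (by linarith) hn2
  have hscale : r * ((1 - (-1)) / (8 * (n : ℝ) ^ 2)) = r / 4 / (n : ℝ) ^ 2 := by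
    field_simp
    norm_num
  have hbound := integral_derivative_eval_rpow_le hq0 hq1 hr0.le hr.le hn hdeg
    (by norm_num : (-1 : ℝ) < 1) hP hP'
  rw [hscale] at hbound
  have hconst : 4 * (1 - q) ≤ 2 / q := by
    rw [le_div_iff₀ hq0]
    linarith [sq_nonneg (2 * q - 1)]
  exact hbound.trans (mul_le_mul_of_nonneg_right hconst
    (integral_rpow_mul_sub_rpow_neg_nonneg (by linarith) (by linarith) fun x hx =>
      eval_nonneg_of_derivative_nonneg hP hP' x ⟨hx.1, by linarith [hx.2]⟩))

/-- For `0 < q < 1` there is `c₀ ∈ (0,1)` such that `∫_{-1}^1 P'^q` is bounded by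
`(2/q)` times the integral of `P^q (1-x)^(-q)` away from the right endpoint. -/
theorem stmt12 (q : ℝ) (hq0 : 0 < q) (hq1 : q < 1) :
    ∃ c₀ : ℝ, 0 < c₀ ∧ c₀ < 1 ∧ ∀ n : ℕ, 0 < n →
      ∀ P : Polynomial ℝ, P.natDegree ≤ n → P.eval (-1) = 0 →
        (∀ x ∈ Set.Icc (-1 : ℝ) 1, 0 ≤ P.eval x) →
        (∀ x ∈ Set.Icc (-1 : ℝ) 1, 0 ≤ P.derivative.eval x) →
        (∫ x in (-1 : ℝ)..1, (P.derivative.eval x) ^ q) ≤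
          (2 / q) * ∫ x in (-1 : ℝ)..(1 - c₀ / (n : ℝ) ^ 2),
            (P.eval x) ^ q * (1 - x) ^ (-q) := by
  obtain ⟨c₀, hc0, hc1, h⟩ := stmt12_general q hq0 hq1
  exact ⟨c₀, hc0, hc1, fun n hn P hdeg hroot _ => h n hn P hdeg hroot.ge⟩
end

section
/- For every positive integer n, the supremum of ‖P'‖_{L_∞[−1,1]} / ‖P‖_{L_∞[−1,1]}, taken over all real polynomials P of degree at most n that are not identically zero and satisfy P'(x) ≥ 0 for all x ∈ [−1, 1], equals (n+1)²/4 if n is odd, and equals n(n+2)/4 if n is even. -/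
open Polynomial MeasureTheory

/-- The sup norm of `f` on `[a,b]`. -/
noncomputable def LinfNorm (f : ℝ → ℝ) (a b : ℝ) : ℝ :=
  sSup ((fun x => |f x|) '' Set.Icc a b)

/-!
For `p = P' ≥ 0` of degree at most `m = n - 1` on `[a, b]`, the claim is the sharp inequality
`(b - a) p(x) ≤ c ∫ p` together with `∫ p = P(b) - P(a) ≤ 2 ‖P‖`. Splitting `[a, b]` at `x` reduces
the inequality to an endpoint, say `p(1) ≤ c ∫ p` on `[0, 1]`. A polynomial that is nonnegative
there is a sum of terms `x ^ i (1 - x) ^ j q ^ 2`; those with `j > 0` vanish at `1`, and the others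
can be written `x ^ α q ^ 2` with `α ∈ {0, 1}`, for which Cauchy–Schwarz against the kernel `Q`
reproducing evaluation at `1` for the weight `x ^ α` gives `q(1) ^ 2 ≤ Q(1) ∫ x ^ α q ^ 2`. Equality
holds for `q = Q`, and the primitive of the resulting `p`, centred so that `P(a) = -P(b)`, is
extremal.
-/

open Set
open scoped Nat Pointwise

section Derivative

theorem eval_iterate_derivative_eq_factorial_mul_taylor_coeff {R : Type*} [CommSemiring R]
    (p : R[X]) (r : R) (k : ℕ) : (derivative^[k] p).eval r = k ! * (taylor r p).coeff k := by
  rw [taylor_coeff, ← factorial_smul_hasseDeriv, LinearMap.smul_apply, eval_smul, nsmul_eq_mul]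

theorem eval_iterate_derivative_eq_zero_of_pow_dvd {R : Type*} [CommRing R] {p : R[X]} {r : R}
    {j k : ℕ} (hjk : j < k) (h : (X - C r) ^ k ∣ p) : (derivative^[j] p).eval r = 0 :=
  dvd_iff_isRoot.1 <| (dvd_pow_self _ (Nat.sub_ne_zero_of_lt hjk)).trans <|
    pow_sub_dvd_iterate_derivative_of_pow_dvd j h

theorem exists_derivative_eq {K : Type*} [Field K] [CharZero K] (p : K[X]) :
    ∃ P : K[X], P.derivative = p ∧ P.natDegree ≤ p.natDegree + 1 := by
  refine ⟨∑ i ∈ Finset.range (p.natDegree + 1), monomial (i + 1) (p.coeff i / (i + 1)), ?_, ?_⟩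
  · rw [derivative_sum]
    conv_rhs => rw [p.as_sum_range]
    refine Finset.sum_congr rfl fun i _ => ?_
    rw [derivative_monomial, Nat.cast_succ, div_mul_cancel₀ _ i.cast_add_one_ne_zero,
      Nat.add_sub_cancel]
  · refine natDegree_sum_le_of_forall_le _ _ fun i hi => (natDegree_monomial_le _).trans ?_
    exact Nat.succ_le_of_lt (Finset.mem_range.1 hi)

theorem exists_derivative_eq_and_eval_eq_neg_eval {K : Type*} [Field K] [CharZero K] (p : K[X])
    (a b : K) : ∃ P : K[X], P.derivative = p ∧ P.natDegree ≤ p.natDegree + 1 ∧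
      P.eval a = -P.eval b := by
  obtain ⟨F, hF, hdeg⟩ := exists_derivative_eq p
  refine ⟨F - C ((F.eval a + F.eval b) / 2), ?_, ?_, ?_⟩
  · rw [derivative_sub, derivative_C, sub_zero, hF]
  · rwa [natDegree_sub_C]
  · simp only [eval_sub, eval_C]
    ring

end Derivative

section Integral

variable {a b : ℝ} {p q w : ℝ[X]}

/-- The integral over `[a, b]` as a linear functional on polynomials, so that inequalities between
integrals and point values can be checked on generators of a cone. -/
noncomputable def integralₗ (a b : ℝ) : ℝ[X] →ₗ[ℝ] ℝ where
  toFun p := ∫ x in a..b, p.eval x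
  map_add' p q := by
    simp only [eval_add]
    exact intervalIntegral.integral_add (p.continuous.intervalIntegrable a b)
      (q.continuous.intervalIntegrable a b)
  map_smul' c p := by
    simp only [eval_smul, intervalIntegral.integral_smul, RingHom.id_apply]

theorem integralₗ_nonneg (hab : a ≤ b) (hp : ∀ x ∈ Icc a b, 0 ≤ p.eval x) :
    0 ≤ integralₗ a b p :=
  intervalIntegral.integral_nonneg hab hp

theorem integralₗ_derivative (a b : ℝ) (p : ℝ[X]) :
    integralₗ a b (derivative p) = p.eval b - p.eval a :=
  intervalIntegral.integral_eq_sub_of_hasDerivAt (fun x _ => p.hasDerivAt x)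
    (p.derivative.continuous.intervalIntegrable a b)

theorem integralₗ_mul_derivative (a b : ℝ) (p q : ℝ[X]) :
    integralₗ a b (p * derivative q) =
      p.eval b * q.eval b - p.eval a * q.eval a - integralₗ a b (derivative p * q) := by
  have h := integralₗ_derivative a b (p * q)
  rw [derivative_mul, map_add, eval_mul, eval_mul] at h
  linear_combination h

theorem integralₗ_add_adjacent (a b c : ℝ) (p : ℝ[X]) :
    integralₗ a b p + integralₗ b c p = integralₗ a c p :=
  intervalIntegral.integral_add_adjacent_intervals (p.continuous.intervalIntegrable a b)
    (p.continuous.intervalIntegrable b c)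

theorem integralₗ_symm (a b : ℝ) (p : ℝ[X]) : integralₗ b a p = -integralₗ a b p :=
  intervalIntegral.integral_symm a b

theorem mul_integralₗ_comp_linear (a b : ℝ) (p : ℝ[X]) :
    (b - a) * integralₗ 0 1 (p.comp (C (b - a) * X + C a)) = integralₗ a b p := by
  have h := intervalIntegral.mul_integral_comp_mul_add (a := 0) (b := 1)
    (f := fun x => p.eval x) (b - a) a
  simpa [integralₗ, eval_comp] using h

theorem sq_integralₗ_mul_le (hab : a ≤ b) (hw : ∀ x ∈ Icc a b, 0 ≤ w.eval x) (p q : ℝ[X]) :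
    integralₗ a b (w * (p * q)) ^ 2 ≤ integralₗ a b (w * p ^ 2) * integralₗ a b (w * q ^ 2) := by
  let B : LinearMap.BilinForm ℝ ℝ[X] :=
    (LinearMap.mul ℝ ℝ[X]).compr₂ (integralₗ a b ∘ₗ LinearMap.mulLeft ℝ w)
  have hB : ∀ r, 0 ≤ B r r := fun r => integralₗ_nonneg hab fun x hx => by
    rw [LinearMap.mulLeft_apply, LinearMap.mul_apply', eval_mul, eval_mul]
    exact mul_nonneg (hw x hx) (mul_self_nonneg _)
  have hsymm : LinearMap.IsSymm B :=
    ⟨fun r s => congrArg (fun t => integralₗ a b (w * t)) (mul_comm r s)⟩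
  rw [sq p, sq q]
  exact LinearMap.BilinForm.apply_sq_le_of_symm B hB hsymm p q

theorem integralₗ_mul_iterate_derivative_eq_zero {k : ℕ} (ha : (X - C a) ^ k ∣ p)
    (hb : (X - C b) ^ k ∣ p) (hq : derivative^[k] q = 0) :
    integralₗ a b (q * derivative^[k] p) = 0 := by
  induction k generalizing q with
  | zero => rw [show q = 0 from hq, zero_mul, map_zero]
  | succ k ih =>
    rw [Function.iterate_succ_apply', integralₗ_mul_derivative,
      eval_iterate_derivative_eq_zero_of_pow_dvd k.lt_succ_self ha,
      eval_iterate_derivative_eq_zero_of_pow_dvd k.lt_succ_self hb,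
      ih ((pow_dvd_pow _ k.le_succ).trans ha) ((pow_dvd_pow _ k.le_succ).trans hb) hq]
    ring

end Integral

section EndpointKernel

variable (k a : ℕ)

/-- The polynomial in a Rodrigues-type formula: its `(k + 1)`-st derivative is `k! x ^ a Q`, where
`Q` is the degree-`k` kernel reproducing evaluation at `1` for the weight `x ^ a` on `[0, 1]`. -/
noncomputable def rodriguesPoly : ℝ[X] :=
  X ^ (k + 1 + a) * (X - 1) ^ k

theorem X_pow_dvd_rodriguesPoly : (X - C 0) ^ (k + 1 + a) ∣ rodriguesPoly k a := by
  rw [C_0, sub_zero]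
  exact dvd_mul_right _ _

theorem X_sub_one_pow_dvd_rodriguesPoly : (X - C 1) ^ k ∣ rodriguesPoly k a :=
  dvd_mul_left _ _

theorem taylor_one_rodriguesPoly :
    taylor 1 (rodriguesPoly k a) = (X + 1) ^ (k + 1 + a) * X ^ k := by
  simp [rodriguesPoly, taylor_mul, taylor_pow, taylor_X]

theorem natDegree_rodriguesPoly_le : (rodriguesPoly k a).natDegree ≤ k + 1 + a + k :=
  natDegree_mul_le_of_le (natDegree_X_pow_le _)
    (by simpa using natDegree_pow_le_of_le k (natDegree_X_sub_C_le (1 : ℝ)))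

theorem eval_one_iterate_derivative_rodriguesPoly :
    (derivative^[k] (rodriguesPoly k a)).eval 1 = k ! := by
  rw [eval_iterate_derivative_eq_factorial_mul_taylor_coeff, taylor_one_rodriguesPoly,
    coeff_mul_X_pow']
  simp [coeff_X_add_one_pow]

theorem eval_one_iterate_derivative_succ_rodriguesPoly :
    (derivative^[k + 1] (rodriguesPoly k a)).eval 1 = (k + 1)! * (k + 1 + a) := by
  rw [eval_iterate_derivative_eq_factorial_mul_taylor_coeff, taylor_one_rodriguesPoly,
    coeff_mul_X_pow']
  simp [coeff_X_add_one_pow]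

variable {k} in
theorem integralₗ_mul_iterate_derivative_succ_rodriguesPoly {q : ℝ[X]} (hq : q.natDegree ≤ k) :
    integralₗ 0 1 (q * derivative^[k + 1] (rodriguesPoly k a)) = k ! * q.eval 1 := by
  have hk : k < k + 1 + a := by omega
  have h0 := X_pow_dvd_rodriguesPoly k a
  have horth : integralₗ 0 1 (derivative q * derivative^[k] (rodriguesPoly k a)) = 0 :=
    integralₗ_mul_iterate_derivative_eq_zero ((pow_dvd_pow _ hk.le).trans h0)
      (X_sub_one_pow_dvd_rodriguesPoly k a) (iterate_derivative_eq_zero (x := k + 1) (by omega))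
  rw [Function.iterate_succ_apply', integralₗ_mul_derivative, horth,
    eval_one_iterate_derivative_rodriguesPoly, eval_iterate_derivative_eq_zero_of_pow_dvd hk h0]
  ring

theorem exists_reproducing_kernel_eval_one : ∃ Q : ℝ[X], Q.natDegree ≤ k ∧
    Q.eval 1 = ((k : ℝ) + 1) * (k + 1 + a) ∧
    ∀ q : ℝ[X], q.natDegree ≤ k → integralₗ 0 1 (X ^ a * (Q * q)) = q.eval 1 := by
  obtain ⟨R, hR⟩ : X ^ a ∣ derivative^[k + 1] (rodriguesPoly k a) := by
    have h := pow_sub_dvd_iterate_derivative_of_pow_dvd (k + 1) (X_pow_dvd_rodriguesPoly k a)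
    rwa [Nat.add_sub_cancel_left, C_0, sub_zero] at h
  have hfact : (k ! : ℝ) ≠ 0 := by positivity
  refine ⟨C (k ! : ℝ)⁻¹ * R, (natDegree_C_mul_le _ _).trans ?_, ?_, fun q hq => ?_⟩
  · have hdeg := (natDegree_iterate_derivative (rodriguesPoly k a) (k + 1)).trans
      (Nat.sub_le_sub_right (natDegree_rodriguesPoly_le k a) _)
    rcases eq_or_ne R 0 with rfl | hR0
    · simp
    · rw [hR, natDegree_mul (pow_ne_zero a X_ne_zero) hR0, natDegree_X_pow] at hdeg
      omega
  · have heval := eval_one_iterate_derivative_succ_rodriguesPoly k a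
    rw [hR, eval_mul, eval_pow, eval_X, one_pow, one_mul, Nat.factorial_succ] at heval
    rw [eval_mul, eval_C, heval]
    push_cast
    field_simp
  · have hmul : X ^ a * (C (k ! : ℝ)⁻¹ * R * q) =
        (k ! : ℝ)⁻¹ • (q * derivative^[k + 1] (rodriguesPoly k a)) := by
      rw [hR, smul_eq_C_mul]
      ring
    rw [hmul, map_smul, integralₗ_mul_iterate_derivative_succ_rodriguesPoly a hq, smul_eq_mul,
      inv_mul_cancel_left₀ hfact]

variable {k} in
theorem sq_eval_one_le_mul_integralₗ {q : ℝ[X]} (hq : q.natDegree ≤ k) :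
    q.eval 1 ^ 2 ≤ ((k : ℝ) + 1) * (k + 1 + a) * integralₗ 0 1 (X ^ a * q ^ 2) := by
  obtain ⟨Q, hQdeg, hQ1, hrep⟩ := exists_reproducing_kernel_eval_one k a
  have hweight : ∀ x ∈ Icc (0 : ℝ) 1, 0 ≤ (X ^ a : ℝ[X]).eval x := fun x hx => by
    simpa only [eval_pow, eval_X] using pow_nonneg hx.1 a
  simpa only [hrep q hq, sq Q, hrep Q hQdeg, hQ1] using
    sq_integralₗ_mul_le zero_le_one hweight Q q

end EndpointKernel

section SquareCone

/-- The cone of sums of polynomials `x ^ i (1 - x) ^ j q ^ 2` of degree at most `m`, which will turn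
out to contain every polynomial of degree at most `m` that is nonnegative on `[0, 1]`. Allowing
all exponents `i`, `j`, not just `0` and `1`, makes it visibly closed under products. -/
noncomputable def squareCone (m : ℕ) : AddSubmonoid ℝ[X] :=
  AddSubmonoid.closure {p | ∃ (i j : ℕ) (q : ℝ[X]), i + j + 2 * q.natDegree ≤ m ∧
    X ^ i * (1 - X) ^ j * q ^ 2 = p}

variable {m n : ℕ} {p q : ℝ[X]}

theorem squareCone_mono (h : m ≤ n) : squareCone m ≤ squareCone n :=
  AddSubmonoid.closure_mono fun _ ⟨i, j, q, hdeg, hp⟩ => ⟨i, j, q, hdeg.trans h, hp⟩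

theorem sq_mem_squareCone (h : 2 * q.natDegree ≤ m) : q ^ 2 ∈ squareCone m :=
  AddSubmonoid.subset_closure ⟨0, 0, q, by omega, by ring⟩

theorem C_mem_squareCone {c : ℝ} (hc : 0 ≤ c) : C c ∈ squareCone m := by
  rw [← Real.sq_sqrt hc, C_pow]
  exact sq_mem_squareCone (by simp)

theorem X_sub_C_mem_squareCone {c : ℝ} (hc : c ≤ 0) : X - C c ∈ squareCone 1 := by
  have hX : (X : ℝ[X]) ∈ squareCone 1 := AddSubmonoid.subset_closure ⟨1, 0, 1, by simp, by ring⟩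
  rw [sub_eq_add_neg, ← C_neg]
  exact add_mem hX (C_mem_squareCone (neg_nonneg.2 hc))

theorem C_sub_X_mem_squareCone {c : ℝ} (hc : 1 ≤ c) : C c - X ∈ squareCone 1 := by
  have hX : (1 - X : ℝ[X]) ∈ squareCone 1 :=
    AddSubmonoid.subset_closure ⟨0, 1, 1, by simp, by ring⟩
  have hsum : C c - X = (1 - X) + C (c - 1) := by
    rw [C_sub, C_1]
    ring
  rw [hsum]
  exact add_mem hX (C_mem_squareCone (sub_nonneg.2 hc))

theorem mul_mem_squareCone (hp : p ∈ squareCone m) (hq : q ∈ squareCone n) :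
    p * q ∈ squareCone (m + n) := by
  have hpq := AddSubmonoid.mul_mem_mul hp hq
  rw [squareCone, squareCone, AddSubmonoid.closure_mul_closure] at hpq
  refine AddSubmonoid.closure_mono ?_ hpq
  rintro _ ⟨_, ⟨i, j, f, hf, rfl⟩, _, ⟨i', j', g, hg, rfl⟩, rfl⟩
  have hfg : (f * g).natDegree ≤ f.natDegree + g.natDegree := natDegree_mul_le
  exact ⟨i + i', j + j', f * g, by omega, by ring⟩

theorem eval_nonneg_of_mem_squareCone (hp : p ∈ squareCone m) {x : ℝ} (hx : x ∈ Icc (0 : ℝ) 1) :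
    0 ≤ p.eval x := by
  induction hp using AddSubmonoid.closure_induction with
  | mem p hp =>
    obtain ⟨i, j, q, -, rfl⟩ := hp
    simp only [eval_mul, eval_pow, eval_X, eval_sub, eval_one]
    exact mul_nonneg (mul_nonneg (pow_nonneg hx.1 i) (pow_nonneg (sub_nonneg.2 hx.2) j))
      (sq_nonneg _)
  | zero => rw [eval_zero]
  | add p q _ _ hp hq => rw [eval_add]; exact add_nonneg hp hq

end SquareCone

section Factorization

variable {p : ℝ[X]}

theorem eval_nonneg_of_eval_mul_nonneg {a b : ℝ} (hab : a < b) {d g : ℝ[X]} (hd0 : d ≠ 0)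
    (hd : ∀ x ∈ Icc a b, 0 ≤ d.eval x) (hdg : ∀ x ∈ Icc a b, 0 ≤ (d * g).eval x) :
    ∀ x ∈ Icc a b, 0 ≤ g.eval x := by
  have hdense : Dense {x | d.IsRoot x}ᶜ :=
    (finite_setOfPred_isRoot hd0).countable.dense_compl ℝ
  have hsub : Icc a b ⊆ closure (Ioo a b ∩ {x | d.IsRoot x}ᶜ) := by
    rw [← closure_Ioo hab.ne]
    exact closure_minimal (hdense.open_subset_closure_inter isOpen_Ioo) isClosed_closure
  refine fun x hx => closure_minimal (t := {y | 0 ≤ g.eval y}) ?_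
    (isClosed_le continuous_const g.continuous) (hsub hx)
  rintro y ⟨hy, hroot⟩
  have hyI := Ioo_subset_Icc_self hy
  refine nonneg_of_mul_nonneg_right ?_ ((hd y hyI).lt_of_ne' hroot)
  simpa only [eval_mul] using hdg y hyI

theorem sq_X_sub_C_dvd_of_eval_nonneg {a b c : ℝ} (hp : ∀ x ∈ Icc a b, 0 ≤ p.eval x)
    (hc : c ∈ Ioo a b) (hroot : p.IsRoot c) : (X - C c) ^ 2 ∣ p := by
  rcases eq_or_ne p 0 with rfl | hp0
  · exact dvd_zero _
  have hmin : IsLocalMin (fun x => p.eval x) c := by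
    filter_upwards [Icc_mem_nhds hc.1 hc.2] with x hx
    exact hroot.symm ▸ hp x hx
  have hderiv : p.derivative.IsRoot c := by
    rw [IsRoot, ← Polynomial.deriv]
    exact hmin.deriv_eq_zero
  rw [← le_rootMultiplicity_iff hp0]
  exact (one_lt_rootMultiplicity_iff_isRoot hp0).2 ⟨hroot, hderiv⟩

theorem exists_dvd_mem_squareCone_of_isRoot (hp : ∀ x ∈ Icc (0 : ℝ) 1, 0 ≤ p.eval x) {c : ℝ}
    (hroot : p.IsRoot c) : ∃ d, d ∣ p ∧ 0 < d.natDegree ∧ d ∈ squareCone d.natDegree := by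
  have hlin : X - C c ∣ p := dvd_iff_isRoot.2 hroot
  rcases le_or_gt c 0 with hc0 | hc0
  · exact ⟨X - C c, hlin, by simp, by simpa using X_sub_C_mem_squareCone hc0⟩
  rcases le_or_gt 1 c with hc1 | hc1
  · have hdeg : (C c - X : ℝ[X]).natDegree = 1 := by
      rw [← neg_sub, natDegree_neg, natDegree_X_sub_C]
    refine ⟨C c - X, by rwa [← neg_sub, neg_dvd], by simp [hdeg], ?_⟩
    rw [hdeg]
    exact C_sub_X_mem_squareCone hc1
  · refine ⟨(X - C c) ^ 2, sq_X_sub_C_dvd_of_eval_nonneg hp ⟨hc0, hc1⟩ hroot, by simp, ?_⟩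
    exact sq_mem_squareCone (natDegree_pow _ _).ge

theorem exists_dvd_mem_squareCone_of_aeval_eq_zero {z : ℂ} (hz : aeval z p = 0) (him : z.im ≠ 0) :
    ∃ d, d ∣ p ∧ 0 < d.natDegree ∧ d ∈ squareCone d.natDegree := by
  have hquad : (X ^ 2 - C (2 * z.re) * X + C (‖z‖ ^ 2) : ℝ[X]) =
      (X - C z.re) ^ 2 + C (z.im ^ 2) := by
    rw [Complex.sq_norm, Complex.normSq_apply]
    simp only [C_mul, C_add, C_pow, C_ofNat]
    ring
  have hdeg : ((X - C z.re) ^ 2 + C (z.im ^ 2) : ℝ[X]).natDegree = 2 := by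
    rw [natDegree_add_C, natDegree_pow, natDegree_X_sub_C]
  refine ⟨(X - C z.re) ^ 2 + C (z.im ^ 2), ?_, hdeg ▸ two_pos, ?_⟩
  · rw [← hquad]
    exact quadratic_dvd_of_aeval_eq_zero_im_ne_zero p hz him
  · rw [hdeg]
    exact add_mem (sq_mem_squareCone (by simp)) (C_mem_squareCone (sq_nonneg _))

theorem exists_dvd_mem_squareCone (hdeg : 0 < p.natDegree)
    (hp : ∀ x ∈ Icc (0 : ℝ) 1, 0 ≤ p.eval x) :
    ∃ d, d ∣ p ∧ 0 < d.natDegree ∧ d ∈ squareCone d.natDegree := by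
  obtain ⟨z, hz⟩ := IsAlgClosed.exists_aeval_eq_zero ℂ p (natDegree_pos_iff_degree_pos.1 hdeg).ne'
  by_cases him : z.im = 0
  · have hreal : algebraMap ℝ ℂ z.re = z := Complex.ext rfl him.symm
    rw [← hreal, aeval_algebraMap_eq_zero_iff] at hz
    exact exists_dvd_mem_squareCone_of_isRoot hp hz
  · exact exists_dvd_mem_squareCone_of_aeval_eq_zero hz him

theorem mem_squareCone_of_eval_nonneg (hp : ∀ x ∈ Icc (0 : ℝ) 1, 0 ≤ p.eval x) :
    p ∈ squareCone p.natDegree := by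
  induction hm : p.natDegree using Nat.strong_induction_on generalizing p with
  | _ m ih =>
    subst hm
    rcases Nat.eq_zero_or_pos p.natDegree with hdeg | hdeg
    · obtain ⟨c, rfl⟩ := natDegree_eq_zero.1 hdeg
      exact C_mem_squareCone (by simpa using hp 0 (by simp))
    obtain ⟨d, ⟨g, rfl⟩, hdpos, hd⟩ := exists_dvd_mem_squareCone hdeg hp
    have hd0 : d ≠ 0 := ne_zero_of_natDegree_gt hdpos
    have hg0 : g ≠ 0 := by
      rintro rfl
      simp at hdeg
    have hg : ∀ x ∈ Icc (0 : ℝ) 1, 0 ≤ g.eval x := eval_nonneg_of_eval_mul_nonneg zero_lt_one hd0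
      (fun x hx => eval_nonneg_of_mem_squareCone hd hx) hp
    rw [natDegree_mul hd0 hg0] at ih ⊢
    exact mul_mem_squareCone hd (ih _ (by omega) hg rfl)

end Factorization

section PointwiseBound

variable {m : ℕ} {p : ℝ[X]}

/-- The sharp constant in `(b - a) p(x) ≤ c ∫ p` for polynomials `p ≥ 0` of degree at most `m`
on `[a, b]`. With `m = 2k + α`, `α ∈ {0, 1}`, it is the value at `(1, 1)` of the degree-`k`
reproducing kernel for the weight `x ^ α` on `[0, 1]`. -/
noncomputable def endpointConst (m : ℕ) : ℝ :=
  ((m / 2 : ℕ) + 1) * ((m / 2 : ℕ) + 1 + (m % 2 : ℕ))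

theorem endpointConst_pos (m : ℕ) : 0 < endpointConst m := by
  unfold endpointConst
  positivity

theorem endpointConst_eq (m : ℕ) : endpointConst m =
    if Odd (m + 1) then (((m + 1 : ℕ) : ℝ) + 1) ^ 2 / 4
    else ((m + 1 : ℕ) : ℝ) * ((m + 1 : ℕ) + 2) / 4 := by
  rcases m.even_or_odd' with ⟨k, rfl | rfl⟩
  · rw [if_pos (odd_two_mul_add_one k), endpointConst, show 2 * k / 2 = k by omega,
      show 2 * k % 2 = 0 by omega]
    push_cast
    ring
  · rw [if_neg (by simp [parity_simps]), endpointConst, show (2 * k + 1) / 2 = k by omega,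
      show (2 * k + 1) % 2 = 1 by omega]
    push_cast
    ring

theorem eval_one_X_pow_mul_sq_le {i : ℕ} {q : ℝ[X]} (h : i + 2 * q.natDegree ≤ m) :
    (X ^ i * q ^ 2).eval 1 ≤ endpointConst m * integralₗ 0 1 (X ^ i * q ^ 2) := by
  have hsplit : X ^ i * q ^ 2 = X ^ (i % 2) * (X ^ (i / 2) * q) ^ 2 := by
    rw [mul_pow, ← pow_mul, ← mul_assoc, ← pow_add, mul_comm (i / 2) 2, Nat.mod_add_div]
  have hdeg : (X ^ (i / 2) * q).natDegree ≤ (m - i % 2) / 2 := by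
    have := natDegree_mul_le_of_le (natDegree_X_pow_le (R := ℝ) (i / 2)) le_rfl (q := q)
    omega
  have hconst : (((m - i % 2) / 2 : ℕ) + 1 : ℝ) * (((m - i % 2) / 2 : ℕ) + 1 + (i % 2 : ℕ)) ≤
      endpointConst m := by
    have h₁ : (m - i % 2) / 2 + 1 ≤ m / 2 + 1 := by omega
    have h₂ : (m - i % 2) / 2 + 1 + i % 2 ≤ m / 2 + 1 + m % 2 := by omega
    unfold endpointConst
    exact_mod_cast Nat.mul_le_mul h₁ h₂
  have hint : 0 ≤ integralₗ 0 1 (X ^ i * q ^ 2) := integralₗ_nonneg zero_le_one fun x hx => by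
    simpa only [eval_mul, eval_pow, eval_X] using mul_nonneg (pow_nonneg hx.1 i) (sq_nonneg _)
  calc (X ^ i * q ^ 2).eval 1 = (X ^ (i / 2) * q).eval 1 ^ 2 := by simp
    _ ≤ _ := sq_eval_one_le_mul_integralₗ (i % 2) hdeg
    _ ≤ endpointConst m * integralₗ 0 1 (X ^ i * q ^ 2) := by
      rw [← hsplit]
      exact mul_le_mul_of_nonneg_right hconst hint

theorem eval_one_le_of_mem_squareCone (hp : p ∈ squareCone m) :
    p.eval 1 ≤ endpointConst m * integralₗ 0 1 p := by
  induction hp using AddSubmonoid.closure_induction with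
  | zero => simp
  | add p q _ _ hp hq =>
    rw [eval_add, map_add, mul_add]
    exact add_le_add hp hq
  | mem p hp =>
    obtain ⟨i, j, q, h, rfl⟩ := hp
    rcases Nat.eq_zero_or_pos j with rfl | hj
    · rw [pow_zero, mul_one]
      exact eval_one_X_pow_mul_sq_le (by omega)
    · have heval : (X ^ i * (1 - X) ^ j * q ^ 2).eval (1 : ℝ) = 0 := by simp [hj.ne']
      rw [heval]
      exact mul_nonneg (endpointConst_pos m).le (integralₗ_nonneg zero_le_one fun x hx =>
        eval_nonneg_of_mem_squareCone (AddSubmonoid.subset_closure ⟨i, j, q, h, rfl⟩) hx)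

theorem eval_one_le_mul_integralₗ (hm : p.natDegree ≤ m)
    (hp : ∀ x ∈ Icc (0 : ℝ) 1, 0 ≤ p.eval x) :
    p.eval 1 ≤ endpointConst m * integralₗ 0 1 p :=
  eval_one_le_of_mem_squareCone (squareCone_mono hm (mem_squareCone_of_eval_nonneg hp))

theorem natDegree_comp_linear_le {R : Type*} [Semiring R] (p : R[X]) (a b : R) :
    (p.comp (C a * X + C b)).natDegree ≤ p.natDegree :=
  natDegree_comp_le.trans (mul_le_of_le_one_right (Nat.zero_le _) natDegree_linear_le)

theorem abs_sub_mul_eval_le_mul_abs_integralₗ (hm : p.natDegree ≤ m) {x y : ℝ}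
    (hp : ∀ t ∈ uIcc x y, 0 ≤ p.eval t) :
    |y - x| * p.eval y ≤ endpointConst m * |integralₗ x y p| := by
  set q : ℝ[X] := p.comp (C (y - x) * X + C x) with hq
  have hq_nonneg : ∀ t ∈ Icc (0 : ℝ) 1, 0 ≤ q.eval t := fun t ht => by
    rw [hq, eval_comp]
    refine hp _ ?_
    rw [← segment_eq_uIcc, segment_eq_image']
    exact ⟨t, ht, by simp only [eval_add, eval_mul, eval_C, eval_X, smul_eq_mul]; ring⟩
  have hq_one : q.eval 1 = p.eval y := by simp [hq, eval_comp]
  have hbound := eval_one_le_mul_integralₗ ((natDegree_comp_linear_le p _ _).trans hm) hq_nonneg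
  rw [← mul_integralₗ_comp_linear x y p, abs_mul,
    abs_of_nonneg (integralₗ_nonneg zero_le_one hq_nonneg), ← hq_one, mul_left_comm]
  exact mul_le_mul_of_nonneg_left hbound (abs_nonneg _)

theorem sub_mul_eval_le_mul_integralₗ (hm : p.natDegree ≤ m) {a b x : ℝ}
    (hp : ∀ t ∈ Icc a b, 0 ≤ p.eval t) (hx : x ∈ Icc a b) :
    (b - a) * p.eval x ≤ endpointConst m * integralₗ a b p := by
  -- Both sides of the endpoint bound are additive in the interval: add it up on `[a, x]`, `[x, b]`.
  have hleft := abs_sub_mul_eval_le_mul_abs_integralₗ hm fun t ht => hp t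
    (uIcc_subset_Icc (left_mem_Icc.2 (hx.1.trans hx.2)) hx ht)
  have hright := abs_sub_mul_eval_le_mul_abs_integralₗ hm fun t ht => hp t
    (uIcc_subset_Icc (right_mem_Icc.2 (hx.1.trans hx.2)) hx ht)
  have hleft_nonneg : 0 ≤ integralₗ a x p := integralₗ_nonneg hx.1 fun t ht =>
    hp t ⟨ht.1, ht.2.trans hx.2⟩
  have hright_nonneg : 0 ≤ integralₗ x b p := integralₗ_nonneg hx.2 fun t ht =>
    hp t ⟨hx.1.trans ht.1, ht.2⟩
  rw [abs_of_nonneg (sub_nonneg.2 hx.1), abs_of_nonneg hleft_nonneg] at hleft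
  rw [abs_sub_comm, abs_of_nonneg (sub_nonneg.2 hx.2), integralₗ_symm, abs_neg,
    abs_of_nonneg hright_nonneg] at hright
  rw [← integralₗ_add_adjacent a x b p]
  linarith

end PointwiseBound

section LinfNorm

variable {f : ℝ → ℝ} {a b : ℝ}

theorem abs_le_LinfNorm (hf : ContinuousOn f (Icc a b)) {x : ℝ} (hx : x ∈ Icc a b) :
    |f x| ≤ LinfNorm f a b :=
  le_csSup (isCompact_Icc.bddAbove_image hf.abs) (mem_image_of_mem (fun x => |f x|) hx)

theorem LinfNorm_le {M : ℝ} (hab : a ≤ b) (h : ∀ x ∈ Icc a b, |f x| ≤ M) : LinfNorm f a b ≤ M :=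
  csSup_le ((nonempty_Icc.2 hab).image _) (forall_mem_image.2 h)

theorem LinfNorm_eq_max_of_monotoneOn (hab : a ≤ b) (hf : MonotoneOn f (Icc a b)) :
    LinfNorm f a b = max |f a| |f b| := by
  have ha := left_mem_Icc.2 hab
  have hb := right_mem_Icc.2 hab
  refine IsGreatest.csSup_eq ⟨?_, forall_mem_image.2 fun x hx =>
    abs_le_max_abs_abs (hf ha hx hx.1) (hf hx hb hx.2)⟩
  rcases max_choice |f a| |f b| with h | h <;> rw [h]
  · exact mem_image_of_mem (fun x => |f x|) ha
  · exact mem_image_of_mem (fun x => |f x|) hb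

end LinfNorm

section Markov

variable {m : ℕ} {a b : ℝ}

theorem monotoneOn_eval_of_eval_derivative_nonneg {P : ℝ[X]}
    (hP : ∀ x ∈ Icc a b, 0 ≤ P.derivative.eval x) : MonotoneOn (fun x => P.eval x) (Icc a b) := by
  refine monotoneOn_of_deriv_nonneg (convex_Icc a b) P.continuousOn
    P.differentiable.differentiableOn fun x hx => ?_
  rw [Polynomial.deriv]
  exact hP x (interior_subset hx)

theorem sub_mul_LinfNorm_derivative_le (hab : a < b) {P : ℝ[X]} (hdeg : P.natDegree ≤ m + 1)
    (hP : ∀ x ∈ Icc a b, 0 ≤ P.derivative.eval x) :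
    (b - a) * LinfNorm (fun x => P.derivative.eval x) a b ≤
      2 * endpointConst m * LinfNorm (fun x => P.eval x) a b := by
  have hincr : P.eval b - P.eval a ≤ 2 * LinfNorm (fun x => P.eval x) a b := by
    have ha := abs_le_LinfNorm P.continuousOn (left_mem_Icc.2 hab.le)
    have hb := abs_le_LinfNorm P.continuousOn (right_mem_Icc.2 hab.le)
    linarith [neg_le_abs (P.eval a), le_abs_self (P.eval b)]
  rw [← le_div_iff₀' (sub_pos.2 hab)]
  refine LinfNorm_le hab.le fun x hx => ?_
  rw [abs_of_nonneg (hP x hx), le_div_iff₀' (sub_pos.2 hab)]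
  calc (b - a) * P.derivative.eval x
      ≤ endpointConst m * integralₗ a b P.derivative :=
        sub_mul_eval_le_mul_integralₗ ((natDegree_derivative_le P).trans (by omega)) hP hx
    _ = endpointConst m * (P.eval b - P.eval a) := by rw [integralₗ_derivative]
    _ ≤ endpointConst m * (2 * LinfNorm (fun x => P.eval x) a b) :=
        mul_le_mul_of_nonneg_left hincr (endpointConst_pos m).le
    _ = 2 * endpointConst m * LinfNorm (fun x => P.eval x) a b := by ring

theorem exists_eval_one_eq_mul_integralₗ (m : ℕ) : ∃ p : ℝ[X], p.natDegree ≤ m ∧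
    (∀ x ∈ Icc (0 : ℝ) 1, 0 ≤ p.eval x) ∧ 0 < p.eval 1 ∧
    p.eval 1 = endpointConst m * integralₗ 0 1 p := by
  obtain ⟨Q, hQdeg, hQ1, hrep⟩ := exists_reproducing_kernel_eval_one (m / 2) (m % 2)
  have hint : integralₗ 0 1 (X ^ (m % 2) * (Q * Q)) = endpointConst m := (hrep Q hQdeg).trans hQ1
  have heval : (X ^ (m % 2) * (Q * Q)).eval 1 = endpointConst m * endpointConst m := by
    simp [hQ1, endpointConst]
  refine ⟨X ^ (m % 2) * (Q * Q), ?_, fun x hx => ?_, ?_, by rw [heval, hint]⟩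
  · have := natDegree_mul_le_of_le (natDegree_X_pow_le (R := ℝ) (m % 2))
      (natDegree_mul_le_of_le hQdeg hQdeg)
    omega
  · simp only [eval_mul, eval_pow, eval_X]
    exact mul_nonneg (pow_nonneg hx.1 _) (mul_self_nonneg _)
  · rw [heval]
    exact mul_self_pos.2 (endpointConst_pos m).ne'

theorem exists_sub_mul_eval_eq_mul_integralₗ (m : ℕ) (hab : a < b) : ∃ p : ℝ[X],
    p.natDegree ≤ m ∧ (∀ x ∈ Icc a b, 0 ≤ p.eval x) ∧ 0 < p.eval b ∧
    (b - a) * p.eval b = endpointConst m * integralₗ a b p := by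
  obtain ⟨p, hdeg, hp, hpos, heq⟩ := exists_eval_one_eq_mul_integralₗ m
  have hba : b - a ≠ 0 := (sub_pos.2 hab).ne'
  set l : ℝ[X] := C (b - a)⁻¹ * X + C (-(b - a)⁻¹ * a) with hl
  have heval : ∀ x, l.eval x = (x - a) / (b - a) := fun x => by
    simp only [hl, eval_add, eval_mul, eval_C, eval_X]
    ring
  have hinv : l.comp (C (b - a) * X + C a) = X := by
    refine Polynomial.funext fun x => ?_
    simp only [eval_comp, heval, eval_add, eval_mul, eval_C, eval_X]
    field_simp
    ring
  have hone : (p.comp l).eval b = p.eval 1 := by rw [eval_comp, heval, div_self hba]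
  refine ⟨p.comp l, (natDegree_comp_linear_le p _ _).trans hdeg, fun x hx => ?_, hone ▸ hpos, ?_⟩
  · rw [eval_comp, heval]
    exact hp _ ⟨div_nonneg (sub_nonneg.2 hx.1) (sub_pos.2 hab).le,
      div_le_one_of_le₀ (sub_le_sub_right hx.2 a) (sub_pos.2 hab).le⟩
  · rw [hone, heq, ← mul_integralₗ_comp_linear a b, comp_assoc, hinv, comp_X]
    ring

theorem exists_le_sub_mul_LinfNorm_derivative (m : ℕ) (hab : a < b) : ∃ P : ℝ[X],
    P.natDegree ≤ m + 1 ∧ (∀ x ∈ Icc a b, 0 ≤ P.derivative.eval x) ∧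
    0 < LinfNorm (fun x => P.eval x) a b ∧
    2 * endpointConst m * LinfNorm (fun x => P.eval x) a b ≤
      (b - a) * LinfNorm (fun x => P.derivative.eval x) a b := by
  obtain ⟨p, hdeg, hp, hpos, heq⟩ := exists_sub_mul_eval_eq_mul_integralₗ m hab
  obtain ⟨P, rfl, hPdeg, hsymm⟩ := exists_derivative_eq_and_eval_eq_neg_eval p a b
  have hint : integralₗ a b P.derivative = 2 * P.eval b := by
    rw [integralₗ_derivative, hsymm]
    ring
  have hPb : 0 < P.eval b := by
    have h := mul_pos (sub_pos.2 hab) hpos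
    rw [heq, hint] at h
    linarith [pos_of_mul_pos_right h (endpointConst_pos m).le]
  have hnorm : LinfNorm (fun x => P.eval x) a b = P.eval b := by
    rw [LinfNorm_eq_max_of_monotoneOn hab.le (monotoneOn_eval_of_eval_derivative_nonneg hp),
      hsymm, abs_neg, max_self, abs_of_pos hPb]
  refine ⟨P, hPdeg.trans (Nat.succ_le_succ hdeg), hp, hnorm ▸ hPb, ?_⟩
  calc 2 * endpointConst m * LinfNorm (fun x => P.eval x) a b
      = (b - a) * P.derivative.eval b := by rw [heq, hint, hnorm]; ring
    _ ≤ (b - a) * LinfNorm (fun x => P.derivative.eval x) a b :=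
        mul_le_mul_of_nonneg_left ((le_abs_self _).trans
          (abs_le_LinfNorm P.derivative.continuousOn (right_mem_Icc.2 hab.le))) (sub_pos.2 hab).le

end Markov

theorem stmt17_general {a b : ℝ} (hab : a < b) {n : ℕ} (hn : 0 < n) :
    IsGreatest {r : ℝ | ∃ P : ℝ[X], P.natDegree ≤ n ∧ P ≠ 0 ∧
        (∀ x ∈ Icc a b, 0 ≤ P.derivative.eval x) ∧
        r = LinfNorm (fun x => P.derivative.eval x) a b / LinfNorm (fun x => P.eval x) a b}
      (2 / (b - a) * if Odd n then ((n : ℝ) + 1) ^ 2 / 4 else (n : ℝ) * ((n : ℝ) + 2) / 4) := by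
  obtain ⟨m, rfl⟩ := Nat.exists_eq_add_one.2 hn
  rw [← endpointConst_eq, div_mul_eq_mul_div]
  have hba := sub_pos.2 hab
  constructor
  · obtain ⟨P, hdeg, hP, hpos, hle⟩ := exists_le_sub_mul_LinfNorm_derivative m hab
    refine ⟨P, hdeg, ?_, hP, ?_⟩
    · rintro rfl
      exact hpos.ne' (by simp [LinfNorm, hab.le])
    · rw [div_eq_div_iff hba.ne' hpos.ne', mul_comm (LinfNorm _ a b)]
      exact hle.antisymm (sub_mul_LinfNorm_derivative_le hab hdeg hP)
  · rintro r ⟨P, hdeg, -, hP, rfl⟩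
    have hnonneg : 0 ≤ LinfNorm (fun x => P.eval x) a b :=
      (abs_nonneg _).trans (abs_le_LinfNorm P.continuousOn (left_mem_Icc.2 hab.le))
    refine div_le_of_le_mul₀ hnonneg (by have := endpointConst_pos m; positivity) ?_
    rw [div_mul_eq_mul_div, le_div_iff₀' hba]
    exact sub_mul_LinfNorm_derivative_le hab hdeg hP

/-- Bernstein–Qazi: the sharp Markov constant for monotone polynomials of degree at
most `n` is `(n+1)²/4` for odd `n` and `n(n+2)/4` for even `n`. -/
theorem stmt17 (n : ℕ) (hn : 0 < n) :
    sSup {r : ℝ | ∃ P : Polynomial ℝ, P.natDegree ≤ n ∧ P ≠ 0 ∧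
        (∀ x ∈ Set.Icc (-1 : ℝ) 1, 0 ≤ P.derivative.eval x) ∧
        r = LinfNorm (fun x => P.derivative.eval x) (-1) 1 /
              LinfNorm (fun x => P.eval x) (-1) 1} =
      if Odd n then ((n : ℝ) + 1) ^ 2 / 4 else (n : ℝ) * ((n : ℝ) + 2) / 4 := by
  rw [(stmt17_general (by norm_num) hn).csSup_eq]
  norm_num
end
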